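/- There exist at least 3 pairwise inequivalent s-extremal singly even self-dual [76,38,14] codes, each admitting an automorphism of order 19 (a coordinate permutation of order 19 mapping the code onto itself); that is, at least 3 pairwise inequivalent singly even self-dual codes of length 76 with minimum weight 14, shadow minimum weight 14, and an automorphism of order 19. -/

import Mathlib

open Finset

/-- Hamming weight of a binary vector. -/
def wt {n : ℕ} (x : Fin n → ZMod 2) : ℕ := hammingNorm x

/-- The dual of a set of binary vectors with respect to the standard inner product. -/
def dualSet {n : ℕ} (C : Set (Fin n → ZMod 2)) : Set (Fin n → ZMod 2) :=
  {x | ∀ y ∈ C, ∑ i, x i * y i = 0}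

/-- A binary linear code is self-dual if it equals its dual code. -/
def IsSelfDual {n : ℕ} (C : Submodule (ZMod 2) (Fin n → ZMod 2)) : Prop :=
  (C : Set (Fin n → ZMod 2)) = dualSet (C : Set (Fin n → ZMod 2))

/-- A self-dual code is singly even if some codeword has weight not divisible by 4. -/
def IsSinglyEvenSelfDual {n : ℕ} (C : Submodule (ZMod 2) (Fin n → ZMod 2)) : Prop :=
  IsSelfDual C ∧ ∃ x ∈ C, ¬ (4 ∣ wt x)

/-- The doubly even subcode `C₀` of `C` (as a set): codewords of weight ≡ 0 (mod 4). -/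
def evenSub {n : ℕ} (C : Submodule (ZMod 2) (Fin n → ZMod 2)) : Set (Fin n → ZMod 2) :=
  {x | x ∈ C ∧ 4 ∣ wt x}

/-- The shadow `S = C₀^⊥ \ C` of a singly even self-dual code. -/
def shadow {n : ℕ} (C : Submodule (ZMod 2) (Fin n → ZMod 2)) : Set (Fin n → ZMod 2) :=
  dualSet (evenSub C) \ (C : Set (Fin n → ZMod 2))

/-- The minimum (nonzero) weight of a set of vectors. -/
noncomputable def minWtSet {n : ℕ} (S : Set (Fin n → ZMod 2)) : ℕ :=
  sInf {w | ∃ x ∈ S, x ≠ 0 ∧ wt x = w}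

/-- The minimum weight of a code. -/
noncomputable def minWt {n : ℕ} (C : Submodule (ZMod 2) (Fin n → ZMod 2)) : ℕ :=
  minWtSet (C : Set (Fin n → ZMod 2))

/-- A singly even self-dual code of length `n` is s-extremal if
`d(S) = n/2 + 4 - 2 d(C)`. -/
def IsSExtremal {n : ℕ} (C : Submodule (ZMod 2) (Fin n → ZMod 2)) : Prop :=
  IsSinglyEvenSelfDual C ∧
    (minWtSet (shadow C) : ℤ) = ((n / 2 : ℕ) : ℤ) + 4 - 2 * (minWt C : ℤ)

/-- Two codes are equivalent if one is obtained from the other by permuting coordinates. -/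
def CodeEquiv {n : ℕ} (C D : Submodule (ZMod 2) (Fin n → ZMod 2)) : Prop :=
  ∃ σ : Equiv.Perm (Fin n),
    Submodule.map (LinearMap.funLeft (ZMod 2) (ZMod 2) σ) C = D

/-- The neighbor `C₀ ∪ (t + C₀)` of `C` obtained from a shadow vector `t`:
the span of the doubly even subcode together with `t`. -/
def neighborCode {n : ℕ} (C : Submodule (ZMod 2) (Fin n → ZMod 2))
    (t : Fin n → ZMod 2) : Submodule (ZMod 2) (Fin n → ZMod 2) :=
  Submodule.span (ZMod 2) (evenSub C ∪ {t})

/-!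
The three codes contain the same 19-fold rotations of 12 doubly even words on four blocks of 19
coordinates. A word orthogonal to all these rotations is determined by its restrictions to any two
blocks together with the parities of its four blocks, and its inner products and its weight modulo 4
depend only on the parities. Duals and shadows are thus computed in codes of length 4, and the three
codes correspond to the three ways of pairing the blocks.

A nonzero word of weight at most 13 would have few ones on two of the blocks, and the words that do
are enumerated up to rotation. By Sylow's theorem an equivalence between two of the codes can be
chosen to normalize the rotation; the weights of the generating words then force it to fix each
block, so it cannot change the pairing.
-/

open Matrix

section Weight

variable {n : ℕ}

theorem wt_eq_sum_val (x : Fin n → ZMod 2) : wt x = ∑ i, (x i).val := by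
  have val_eq_ite (a : ZMod 2) : a.val = if a ≠ 0 then 1 else 0 := by revert a; decide
  simp only [wt, hammingNorm, card_filter, val_eq_ite]

theorem wt_comp (x : Fin n → ZMod 2) (τ : Equiv.Perm (Fin n)) : wt (x ∘ τ) = wt x := by
  simp only [wt_eq_sum_val, Function.comp_apply, Equiv.sum_comp τ fun i => (x i).val]

theorem natCast_wt (x : Fin n → ZMod 2) : (wt x : ZMod 2) = ∑ i, x i := by
  simp only [wt_eq_sum_val, Nat.cast_sum, ZMod.natCast_val, ZMod.cast_id', id]

theorem wt_add_add_two_mul_wt_mul (x y : Fin n → ZMod 2) :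
    wt (x + y) + 2 * wt (x * y) = wt x + wt y := by
  have val_add (a b : ZMod 2) : (a + b).val + 2 * (a * b).val = a.val + b.val := by
    revert a b; decide
  simp only [wt_eq_sum_val, mul_sum, ← sum_add_distrib, Pi.add_apply, Pi.mul_apply, val_add]

theorem dotProduct_eq_zero_iff_modEq (x y : Fin n → ZMod 2) :
    x ⬝ᵥ y = 0 ↔ wt (x + y) ≡ wt x + wt y [MOD 4] := by
  have dot_eq : x ⬝ᵥ y = (wt (x * y) : ZMod 2) := (natCast_wt (x * y)).symm
  have := wt_add_add_two_mul_wt_mul x y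
  rw [dot_eq, ZMod.natCast_eq_zero_iff, Nat.ModEq]
  omega

theorem dotProduct_eq_zero_of_mem_span {S T : Set (Fin n → ZMod 2)}
    (orthogonal : ∀ v ∈ S, ∀ w ∈ T, v ⬝ᵥ w = 0) {x y : Fin n → ZMod 2}
    (hx : x ∈ Submodule.span (ZMod 2) S) (hy : y ∈ Submodule.span (ZMod 2) T) : x ⬝ᵥ y = 0 := by
  induction hx, hy using Submodule.span_induction₂ with
  | mem_mem v w hv hw => exact orthogonal v hv w hw
  | zero_left => exact zero_dotProduct _
  | zero_right => exact dotProduct_zero _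
  | add_left _ _ _ _ _ _ h₁ h₂ => rw [add_dotProduct, h₁, h₂, add_zero]
  | add_right _ _ _ _ _ _ h₁ h₂ => rw [dotProduct_add, h₁, h₂, add_zero]
  | smul_left _ _ _ _ _ h => rw [smul_dotProduct, h, smul_zero]
  | smul_right _ _ _ _ _ h => rw [dotProduct_smul, h, smul_zero]

theorem four_dvd_wt_of_mem_span {S : Set (Fin n → ZMod 2)} (doublyEven : ∀ v ∈ S, 4 ∣ wt v)
    (orthogonal : ∀ v ∈ S, ∀ w ∈ S, v ⬝ᵥ w = 0) {x : Fin n → ZMod 2}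
    (hx : x ∈ Submodule.span (ZMod 2) S) : 4 ∣ wt x := by
  induction hx using Submodule.span_induction with
  | mem v hv => exact doublyEven v hv
  | zero => simp [wt]
  | add x y hx hy ihx ihy =>
    have wt_add := (dotProduct_eq_zero_iff_modEq x y).1
      (dotProduct_eq_zero_of_mem_span orthogonal hx hy)
    exact (wt_add.dvd_iff dvd_rfl).2 (dvd_add ihx ihy)
  | smul a x _ ih =>
    obtain rfl | rfl : a = 0 ∨ a = 1 := by revert a; decide
    · simp [wt]
    · rwa [one_smul]

end Weight

section Duality

variable {n : ℕ}

theorem IsSelfDual.two_mul_finrank {C : Submodule (ZMod 2) (Fin n → ZMod 2)}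
    (hC : IsSelfDual C) : 2 * Module.finrank (ZMod 2) C = n := by
  set B : LinearMap.BilinForm (ZMod 2) (Fin n → ZMod 2) := dotProductBilin (ZMod 2) (ZMod 2)
  have nondegenerate : B.Nondegenerate := ⟨fun x h => dotProduct_eq_zero x h,
    fun y h => dotProduct_eq_zero y fun x => (dotProduct_comm y x).trans (h x)⟩
  have orthogonal_eq : B.orthogonal C = C := by
    ext x
    refine Iff.trans ?_ (Set.ext_iff.1 hC x).symm
    exact forall₂_congr fun y _ => Eq.congr_left (dotProduct_comm y x)
  have := LinearMap.BilinForm.finrank_orthogonal nondegenerate C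
  have := Submodule.finrank_le C
  rw [Module.finrank_fin_fun] at *
  rw [orthogonal_eq] at *
  omega

theorem minWtSet_eq {S : Set (Fin n → ZMod 2)} {w : ℕ} (le_wt : ∀ x ∈ S, x ≠ 0 → w ≤ wt x)
    {x : Fin n → ZMod 2} (hx : x ∈ S) (hx₀ : x ≠ 0) (hxw : wt x = w) : minWtSet S = w := by
  refine IsLeast.csInf_eq ⟨⟨x, hx, hx₀, hxw⟩, ?_⟩
  rintro _ ⟨y, hy, hy₀, rfl⟩
  exact le_wt y hy hy₀

end Duality

section CodeEquiv

variable {n : ℕ} {C D : Submodule (ZMod 2) (Fin n → ZMod 2)}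

theorem map_funLeft_eq_iff {τ : Equiv.Perm (Fin n)} :
    C.map (LinearMap.funLeft (ZMod 2) (ZMod 2) τ) = D ↔ ∀ x, x ∘ τ ∈ D ↔ x ∈ C := by
  have injective := LinearMap.funLeft_injective_of_surjective (ZMod 2) (ZMod 2) τ τ.surjective
  refine ⟨?_, fun h => Submodule.ext fun y => ⟨?_, fun hy => ⟨y ∘ τ.symm, ?_, ?_⟩⟩⟩
  · rintro rfl x
    exact injective.mem_set_image (s := C)
  · rintro ⟨x, hx, rfl⟩
    exact (h x).2 hx
  · refine (h _).1 ?_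
    rwa [Function.comp_assoc, Equiv.symm_comp_self, Function.comp_id]
  · funext i
    simp [LinearMap.funLeft_apply]

/-- The automorphism group of a code. A permutation `τ` acts on words on the right, by `x ↦ x ∘ τ`,
as in the definition of `CodeEquiv`. -/
def codeAut (C : Submodule (ZMod 2) (Fin n → ZMod 2)) : Subgroup (Equiv.Perm (Fin n)) where
  carrier := {τ | ∀ x, x ∘ τ ∈ C ↔ x ∈ C}
  one_mem' _ := Iff.rfl
  mul_mem' {a b} ha hb x := (hb (x ∘ a)).trans (ha x)
  inv_mem' {a} ha x := by
    rw [← ha (x ∘ ⇑a⁻¹), Function.comp_assoc, ← Equiv.Perm.coe_mul, inv_mul_cancel]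
    rfl

end CodeEquiv

section Sylow

open Subgroup

-- By the normalizer condition in `p`-groups, `zpowers σ` is a Sylow subgroup.
theorem exists_conj_mem_zpowers_of_orderOf_eq {G : Type*} [Group G] [Finite G] {p : ℕ}
    [Fact p.Prime] {σ σ' : G} (hσ : orderOf σ = p) (hσ' : orderOf σ' = p)
    (normalizer_le : ∀ g, g * σ * g⁻¹ ∈ zpowers σ → (∃ k, orderOf g = p ^ k) → g ∈ zpowers σ) :
    ∃ g, g * σ' * g⁻¹ ∈ zpowers σ := by
  have isPGroup_zpowers {ρ : G} (hρ : orderOf ρ = p) : IsPGroup p (zpowers ρ) :=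
    IsPGroup.of_card (n := 1) (by rw [Nat.card_zpowers, hρ, pow_one])
  obtain ⟨P, hP⟩ := (isPGroup_zpowers hσ).exists_le_sylow
  obtain ⟨Q, hQ⟩ := (isPGroup_zpowers hσ').exists_le_sylow
  have sylow_le : (P : Subgroup G) ≤ zpowers σ := by
    have := P.isPGroup'.isNilpotent
    by_contra h
    have lt_normalizer := Group.normalizerCondition_of_isNilpotent ((zpowers σ).subgroupOf P)
      (lt_top_iff_ne_top.2 fun h' => h (subgroupOf_eq_top.1 h'))
    obtain ⟨g, hg, hgσ⟩ := SetLike.exists_of_lt lt_normalizer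
    refine hgσ (normalizer_le g ?_ ?_)
    · exact (Subgroup.mem_normalizer_iff.1 hg ⟨σ, hP (mem_zpowers σ)⟩).1 (mem_zpowers σ)
    · obtain ⟨k, hk⟩ := IsPGroup.iff_orderOf.1 P.isPGroup' g
      exact ⟨k, (orderOf_coe g).trans hk⟩
  obtain ⟨g, rfl⟩ := MulAction.exists_smul_eq G Q P
  refine ⟨g, sylow_le ?_⟩
  exact smul_mem_pointwise_smul _ (MulAut.conj g) _ (hQ (mem_zpowers σ'))

end Sylow

theorem CodeEquiv.exists_conj_mem_zpowers {n p : ℕ} [Fact p.Prime]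
    {C D : Submodule (ZMod 2) (Fin n → ZMod 2)} (hCD : CodeEquiv C D) {σ : Equiv.Perm (Fin n)}
    (hσ : orderOf σ = p) (hσC : σ ∈ codeAut C) (hσD : σ ∈ codeAut D)
    (normalizer_le : ∀ g ∈ codeAut D, g * σ * g⁻¹ ∈ Subgroup.zpowers σ →
      (∃ k, orderOf g = p ^ k) → g ∈ Subgroup.zpowers σ) :
    ∃ v : Equiv.Perm (Fin n), v * σ * v⁻¹ ∈ Subgroup.zpowers σ ∧ ∀ x, x ∘ v ∈ C ↔ x ∈ D := by
  obtain ⟨τ, hτ⟩ := hCD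
  rw [map_funLeft_eq_iff] at hτ
  have comp_inv_mem_iff (x) : x ∘ ⇑τ⁻¹ ∈ C ↔ x ∈ D := by
    rw [← hτ, Function.comp_assoc, ← Equiv.Perm.coe_mul, inv_mul_cancel]
    rfl
  have conj_mem : τ⁻¹ * σ * τ ∈ codeAut D := fun x =>
    (hτ _).trans ((hσC _).trans (comp_inv_mem_iff x))
  have mem_zpowers_iff (g : codeAut D) :
      g ∈ Subgroup.zpowers (⟨σ, hσD⟩ : codeAut D) ↔
        (g : Equiv.Perm (Fin n)) ∈ Subgroup.zpowers σ := by
    simp only [Subgroup.mem_zpowers_iff, Subtype.ext_iff, Subgroup.coe_zpow]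
  obtain ⟨g, hg⟩ := exists_conj_mem_zpowers_of_orderOf_eq (σ := (⟨σ, hσD⟩ : codeAut D))
    (σ' := ⟨_, conj_mem⟩) (p := p) (by rwa [Subgroup.orderOf_mk])
    (by rw [Subgroup.orderOf_mk, ← hσ,
      show τ⁻¹ * σ * τ = MulAut.conj τ⁻¹ σ by simp, MulEquiv.orderOf_eq])
    (fun g hg hk => (mem_zpowers_iff g).2
      (normalizer_le g g.2 ((mem_zpowers_iff _).1 hg) (by rwa [Subgroup.orderOf_coe])))
  refine ⟨g * τ⁻¹, ?_, fun x => (comp_inv_mem_iff (x ∘ g)).trans (g.2 x)⟩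
  have := (mem_zpowers_iff _).1 hg
  simpa [mul_assoc] using this

section BlockShift

variable {ι : Type*} {n p : ℕ} (e : ι × ZMod p ≃ Fin n)

/-- The permutation of the coordinates that rotates all blocks by `s`: the equivalence `e` arranges
the `n` coordinates into blocks, indexed by `ι`, of `p` coordinates each. -/
def blockShift (s : ZMod p) : Equiv.Perm (Fin n) :=
  e.permCongr ((Equiv.refl ι).prodCongr (Equiv.addRight s))

@[simp]
theorem blockShift_apply (s : ZMod p) (b : ι) (t : ZMod p) :
    blockShift e s (e (b, t)) = e (b, t + s) := by
  simp [blockShift]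

theorem funext_block {α : Type*} {x y : Fin n → α} (h : ∀ b t, x (e (b, t)) = y (e (b, t))) :
    x = y :=
  funext fun c => by simpa using h (e.symm c).1 (e.symm c).2

theorem perm_ext_block {g h : Equiv.Perm (Fin n)} (hgh : ∀ b t, g (e (b, t)) = h (e (b, t))) :
    g = h :=
  DFunLike.coe_injective (funext_block e hgh)

theorem blockShift_one_pow (k : ℕ) : blockShift e 1 ^ k = blockShift e k := by
  refine perm_ext_block e fun b t => ?_
  induction k with
  | zero => simp
  | succ k ih => simp [pow_succ', ih, add_assoc]

theorem mem_zpowers_blockShift [NeZero p] {g : Equiv.Perm (Fin n)} :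
    g ∈ Subgroup.zpowers (blockShift e 1) ↔ ∃ s, blockShift e s = g := by
  rw [← mem_powers_iff_mem_zpowers]
  constructor
  · rintro ⟨k, rfl⟩
    exact ⟨k, (blockShift_one_pow e k).symm⟩
  · rintro ⟨s, rfl⟩
    exact ⟨s.val, (blockShift_one_pow e _).trans (congrArg _ (ZMod.natCast_zmod_val s))⟩

variable [Nonempty ι]

theorem blockShift_injective : Function.Injective (blockShift e) := fun s s' h => by
  obtain ⟨b⟩ := ‹Nonempty ι›
  simpa using DFunLike.congr_fun h (e (b, 0))

theorem orderOf_blockShift_one [Fact p.Prime] : orderOf (blockShift e 1) = p := by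
  have blockShift_zero : blockShift e 0 = 1 := perm_ext_block e fun b t => by simp
  refine orderOf_eq_prime ?_ fun h =>
    one_ne_zero (blockShift_injective e (h.trans blockShift_zero.symm))
  rw [blockShift_one_pow, ZMod.natCast_self, blockShift_zero]

theorem exists_affine_of_conj_blockShift_mem [Fact p.Prime] {g : Equiv.Perm (Fin n)}
    (hg : g * blockShift e 1 * g⁻¹ ∈ Subgroup.zpowers (blockShift e 1)) :
    ∃ (π : Equiv.Perm ι) (m : ZMod p) (s : ι → ZMod p), m ≠ 0 ∧
      ∀ b t, g (e (b, t)) = e (π b, m * t + s b) := by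
  obtain ⟨m, hm⟩ := (mem_zpowers_blockShift e).1 hg
  have apply_add_one (c) : g (blockShift e 1 c) = blockShift e m (g c) := by simp [hm]
  set f : ι → ι := fun b => (e.symm (g (e (b, 0)))).1
  set s : ι → ZMod p := fun b => (e.symm (g (e (b, 0)))).2
  have apply_natCast (b) (k : ℕ) : g (e (b, k)) = e (f b, m * k + s b) := by
    induction k with
    | zero => simp [f, s]
    | succ k ih => simpa [ih, mul_add, add_right_comm] using apply_add_one (e (b, k))
  have apply_eq (b t) : g (e (b, t)) = e (f b, m * t + s b) := by
    simpa using apply_natCast b t.val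
  have hm₀ : m ≠ 0 := by
    rintro rfl
    obtain ⟨b⟩ := ‹Nonempty ι›
    have : g (e (b, 0)) = g (e (b, 1)) := by simp only [apply_eq, zero_mul]
    simp at this
  have f_bijective : f.Bijective := by
    refine ⟨fun b b' hbb' => ?_, fun b' => ⟨(e.symm (g.symm (e (b', 0)))).1, ?_⟩⟩
    · have : g (e (b, (s b' - s b) / m)) = g (e (b', 0)) := by
        rw [apply_eq, apply_eq, hbb', mul_div_cancel₀ _ hm₀]
        simp
      exact congrArg Prod.fst (e.injective (g.injective this))
    · have := apply_eq (e.symm (g.symm (e (b', 0)))).1 (e.symm (g.symm (e (b', 0)))).2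
      rw [Prod.mk.eta, Equiv.apply_symm_apply, Equiv.apply_symm_apply] at this
      exact (congrArg Prod.fst (e.injective this)).symm
  exact ⟨Equiv.ofBijective f f_bijective, m, s, hm₀, apply_eq⟩

end BlockShift

section BlockParity

variable {m n p : ℕ} (e : Fin m × ZMod p ≃ Fin n)

/-- The word of length `n` that is constant on each block, with values given by `c`. -/
def inflate (c : Fin m → ZMod 2) : Fin n → ZMod 2 := fun i => c (e.symm i).1

@[simp]
theorem inflate_apply (c : Fin m → ZMod 2) (b : Fin m) (t : ZMod p) :
    inflate e c (e (b, t)) = c b := by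
  simp [inflate]

theorem dotProduct_comp_blockShift (x y : Fin n → ZMod 2) (s t : ZMod p) :
    (x ∘ blockShift e s) ⬝ᵥ (y ∘ blockShift e t) = x ⬝ᵥ (y ∘ blockShift e (t - s)) := by
  rw [← comp_equiv_dotProduct_comp_equiv x _ (blockShift e s)]
  congr 1
  exact funext_block e fun b u => by simp [add_assoc]

variable [NeZero p]

/-- The word of length `m` formed by the parities of the blocks of a word of length `n`. -/
def blockParity : (Fin n → ZMod 2) →ₗ[ZMod 2] (Fin m → ZMod 2) where
  toFun x b := ∑ t, x (e (b, t))
  map_add' x y := by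
    funext b
    simp only [Pi.add_apply, sum_add_distrib]
  map_smul' a x := by
    funext b
    simp only [Pi.smul_apply, smul_sum, RingHom.id_apply]

theorem blockParity_apply (x : Fin n → ZMod 2) (b : Fin m) :
    blockParity e x b = ∑ t, x (e (b, t)) := rfl

theorem sum_eq_sum_block {M : Type*} [AddCommMonoid M] (f : Fin n → M) :
    ∑ i, f i = ∑ b, ∑ t, f (e (b, t)) := by
  rw [← e.sum_comp, Fintype.sum_prod_type]

theorem blockParity_comp_blockShift (x : Fin n → ZMod 2) (s : ZMod p) :
    blockParity e (x ∘ blockShift e s) = blockParity e x := by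
  funext b
  simp only [blockParity_apply, Function.comp_apply, blockShift_apply]
  exact Equiv.sum_comp (Equiv.addRight s) fun t => x (e (b, t))

theorem blockParity_inflate (hp : Odd p) (c : Fin m → ZMod 2) :
    blockParity e (inflate e c) = c := by
  funext b
  simp [blockParity_apply, (ZMod.natCast_eq_one_iff_odd).2 hp]

theorem dotProduct_inflate (x : Fin n → ZMod 2) (c : Fin m → ZMod 2) :
    x ⬝ᵥ inflate e c = blockParity e x ⬝ᵥ c := by
  simp only [dotProduct, sum_eq_sum_block e, inflate_apply, blockParity_apply, sum_mul]

theorem wt_inflate (c : Fin m → ZMod 2) : wt (inflate e c) = p * wt c := by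
  simp [wt_eq_sum_val, sum_eq_sum_block e, mul_sum]

/-- The number of coordinates in block `b` at which a word is nonzero. -/
def blockWt (x : Fin n → ZMod 2) (b : Fin m) : ℕ := ∑ t, (x (e (b, t))).val

theorem sum_blockWt (x : Fin n → ZMod 2) : ∑ b, blockWt e x b = wt x := by
  rw [wt_eq_sum_val, sum_eq_sum_block e]
  rfl

theorem natCast_blockWt (x : Fin n → ZMod 2) (b : Fin m) :
    (blockWt e x b : ZMod 2) = blockParity e x b := by
  simp [blockWt, blockParity_apply]

theorem blockWt_comp_blockShift (x : Fin n → ZMod 2) (s : ZMod p) :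
    blockWt e (x ∘ blockShift e s) = blockWt e x := by
  funext b
  simp only [blockWt, Function.comp_apply, blockShift_apply]
  exact Equiv.sum_comp (Equiv.addRight s) fun t => (x (e (b, t))).val

theorem wt_blockParity (x : Fin n → ZMod 2) : wt (blockParity e x) = ∑ b, blockWt e x b % 2 := by
  simp only [wt_eq_sum_val, ← natCast_blockWt, ZMod.val_natCast]

theorem apply_eq_zero_of_blockWt_eq_zero {x : Fin n → ZMod 2} {b : Fin m} (hx : blockWt e x b = 0)
    (t : ZMod p) : x (e (b, t)) = 0 :=
  (ZMod.val_eq_zero _).1 (sum_eq_zero_iff.1 hx t (mem_univ t))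

theorem exists_apply_eq_one_of_blockWt_ne_zero {x : Fin n → ZMod 2} {b : Fin m}
    (hx : blockWt e x b ≠ 0) : ∃ t, x (e (b, t)) = 1 := by
  obtain ⟨t, -, ht⟩ := exists_ne_zero_of_sum_ne_zero hx
  refine ⟨t, ?_⟩
  generalize x (e (b, t)) = a at ht
  revert a
  decide

end BlockParity

section BlockSystem

variable {n p : ℕ} {e : Fin 4 × ZMod p ≃ Fin n} {g : Fin 4 → Fin 4 → Fin n → ZMod 2}

/-- The dual of the code spanned by all rotations of the words `g i j`. -/
def orbitDual (e : Fin 4 × ZMod p ≃ Fin n) (g : Fin 4 → Fin 4 → Fin n → ZMod 2) :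
    Submodule (ZMod 2) (Fin n → ZMod 2) where
  carrier := {x | ∀ i j t, x ⬝ᵥ (g i j ∘ blockShift e t) = 0}
  add_mem' hx hy i j t := by rw [add_dotProduct, hx, hy, add_zero]
  zero_mem' i j t := zero_dotProduct _
  smul_mem' a x hx i j t := by rw [smul_dotProduct, hx, smul_zero]

theorem mem_orbitDual {x : Fin n → ZMod 2} :
    x ∈ orbitDual e g ↔ ∀ i j t, x ⬝ᵥ (g i j ∘ blockShift e t) = 0 := Iff.rfl

theorem comp_blockShift_mem_orbitDual_iff {x : Fin n → ZMod 2} (s : ZMod p) :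
    x ∘ blockShift e s ∈ orbitDual e g ↔ x ∈ orbitDual e g := by
  simp only [mem_orbitDual, dotProduct_comp_blockShift]
  exact forall₂_congr fun i j =>
    (Equiv.subRight s).forall_congr_right (q := fun t => x ⬝ᵥ (g i j ∘ blockShift e t) = 0)

variable [NeZero p]

/-- The combination of the rotations of `g i j` with coefficients `a`. The coefficient `a t` belongs
to the rotation whose restriction to block `i` is the complement of the point `t`. -/
def orbitSum (e : Fin 4 × ZMod p ≃ Fin n) (g : Fin 4 → Fin 4 → Fin n → ZMod 2) (i j : Fin 4)
    (a : ZMod p → ZMod 2) : Fin n → ZMod 2 :=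
  ∑ t, a t • (g i j ∘ blockShift e (-t))

/-- A family of doubly even words on four blocks whose rotations are pairwise orthogonal. On block
`i` the word `g i j` is the complement of a point, and it vanishes on block `j`, so that the
rotations of `g i j` and `g j i` span the words prescribed on the blocks `i` and `j`. -/
structure IsBlockSystem (e : Fin 4 × ZMod p ≃ Fin n) (g : Fin 4 → Fin 4 → Fin n → ZMod 2) :
    Prop where
  apply_fst : ∀ i j, i ≠ j → ∀ t, g i j (e (i, t)) = if t = 0 then 0 else 1
  apply_snd : ∀ i j t, g i j (e (j, t)) = 0
  blockParity_eq_zero : ∀ i j, blockParity e (g i j) = 0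
  orthogonal : ∀ i j k l t, g i j ⬝ᵥ (g k l ∘ blockShift e t) = 0
  four_dvd_wt : ∀ i j, 4 ∣ wt (g i j)

theorem sum_ite_eq_zero_sub {α M : Type*} [Fintype α] [DecidableEq α] [AddCommGroup M] (a : α → M)
    (t : α) : ∑ u, (if u = t then 0 else a u) = ∑ u, a u - a t := by
  rw [← sum_erase_eq_sub (mem_univ t), ← filter_ne', sum_filter]
  simp only [ne_eq, ite_not]

theorem exists_fourth_index : ∀ i j k : Fin 4, i ≠ j → k ≠ i → k ≠ j →
    ∃ l, k ≠ l ∧ ∀ b, b ≠ k → b = i ∨ b = j ∨ b = l := by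
  decide

namespace IsBlockSystem

variable (h : IsBlockSystem e g)
include h

theorem mem_orbitDual (i j : Fin 4) : g i j ∈ orbitDual e g := h.orthogonal i j

theorem inflate_mem_orbitDual (c : Fin 4 → ZMod 2) : inflate e c ∈ orbitDual e g := fun i j t => by
  rw [dotProduct_comm, dotProduct_inflate, blockParity_comp_blockShift, h.blockParity_eq_zero,
    zero_dotProduct]

theorem sum_mul_apply_fst {i j : Fin 4} (hij : i ≠ j) (a : ZMod p → ZMod 2) (t : ZMod p) :
    ∑ u, a u * g i j (e (i, u - t)) = ∑ u, a u - a t := by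
  simp only [h.apply_fst i j hij, sub_eq_zero, mul_ite, mul_zero, mul_one, sum_ite_eq_zero_sub]

theorem apply_eq_blockParity {x : Fin n → ZMod 2} (hx : x ∈ orbitDual e g) {i j k : Fin 4}
    (hi : ∀ t, x (e (i, t)) = 0) (hj : ∀ t, x (e (j, t)) = 0) (hij : i ≠ j) (hki : k ≠ i)
    (hkj : k ≠ j) (t : ZMod p) : x (e (k, t)) = blockParity e x k := by
  obtain ⟨l, hkl, hl⟩ := exists_fourth_index i j k hij hki hkj
  have dot_eq_zero := hx k l (-t)
  simp only [dotProduct, sum_eq_sum_block e, Function.comp_apply, blockShift_apply,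
    ← sub_eq_add_neg] at dot_eq_zero
  rw [Fintype.sum_eq_single k, h.sum_mul_apply_fst hkl fun u => x (e (k, u)),
    sub_eq_zero] at dot_eq_zero
  · exact dot_eq_zero.symm
  · intro b hb
    obtain rfl | rfl | rfl := hl b hb
    · simp [hi]
    · simp [hj]
    · simp [h.apply_snd]

theorem eq_zero_of_apply_eq_zero {x : Fin n → ZMod 2} (hx : x ∈ orbitDual e g)
    (hx₀ : blockParity e x = 0) {i j : Fin 4} (hij : i ≠ j) (hi : ∀ t, x (e (i, t)) = 0)
    (hj : ∀ t, x (e (j, t)) = 0) : x = 0 := by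
  refine funext_block e fun k t => ?_
  by_cases hki : k = i
  · exact hki ▸ hi t
  by_cases hkj : k = j
  · exact hkj ▸ hj t
  · rw [h.apply_eq_blockParity hx hi hj hij hki hkj, hx₀]
    rfl

theorem odd : Odd p := by
  have sum_eq := h.sum_mul_apply_fst zero_ne_one (fun _ => 1) 0
  have parity_eq : ∑ u, g 0 1 (e (0, u)) = 0 := congrFun (h.blockParity_eq_zero 0 1) 0
  simp only [one_mul, sub_zero, parity_eq] at sum_eq
  simpa [ZMod.natCast_eq_one_iff_odd] using (sub_eq_zero.1 sum_eq.symm)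

theorem orbitSum_mem_orbitDual (i j : Fin 4) (a : ZMod p → ZMod 2) :
    orbitSum e g i j a ∈ orbitDual e g :=
  Submodule.sum_smul_mem _ _ fun _ _ =>
    (comp_blockShift_mem_orbitDual_iff _).2 (h.mem_orbitDual i j)

theorem orbitSum_apply_fst {i j : Fin 4} (hij : i ≠ j) (a : ZMod p → ZMod 2) (t : ZMod p) :
    orbitSum e g i j a (e (i, t)) = ∑ u, a u - a t := by
  simp [orbitSum, h.apply_fst i j hij, ← sub_eq_add_neg, sub_eq_zero, eq_comm (a := t),
    sum_ite_eq_zero_sub]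

theorem orbitSum_apply_snd (i j : Fin 4) (a : ZMod p → ZMod 2) (t : ZMod p) :
    orbitSum e g i j a (e (j, t)) = 0 := by
  simp [orbitSum, h.apply_snd]

theorem blockParity_orbitSum (i j : Fin 4) (a : ZMod p → ZMod 2) :
    blockParity e (orbitSum e g i j a) = 0 := by
  simp [orbitSum, blockParity_comp_blockShift, h.blockParity_eq_zero]

theorem eq_orbitSum_add_orbitSum_add_inflate {x : Fin n → ZMod 2} (hx : x ∈ orbitDual e g)
    {i j : Fin 4} (hij : i ≠ j) :
    x = orbitSum e g i j (fun t => x (e (i, t))) + orbitSum e g j i (fun t => x (e (j, t))) +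
      inflate e (blockParity e x) := by
  rw [← sub_eq_zero]
  refine h.eq_zero_of_apply_eq_zero (sub_mem hx (add_mem (add_mem (h.orbitSum_mem_orbitDual i j _)
    (h.orbitSum_mem_orbitDual j i _)) (h.inflate_mem_orbitDual _))) ?_ hij (fun t => ?_) fun t => ?_
  · simp [h.blockParity_orbitSum, blockParity_inflate e h.odd]
  · simp only [Pi.sub_apply, Pi.add_apply, h.orbitSum_apply_fst hij, h.orbitSum_apply_snd,
      inflate_apply, blockParity_apply]
    linear_combination (x (e (i, t)) - ∑ u, x (e (i, u))) * CharTwo.two_eq_zero (R := ZMod 2)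
  · simp only [Pi.sub_apply, Pi.add_apply, h.orbitSum_apply_fst hij.symm, h.orbitSum_apply_snd,
      inflate_apply, blockParity_apply]
    linear_combination (x (e (j, t)) - ∑ u, x (e (j, u))) * CharTwo.two_eq_zero (R := ZMod 2)

theorem mem_span_of_blockParity_eq_zero {x : Fin n → ZMod 2} (hx : x ∈ orbitDual e g)
    (hx₀ : blockParity e x = 0) :
    x ∈ Submodule.span (ZMod 2) {y | ∃ i j t, g i j ∘ blockShift e t = y} := by
  have orbitSum_mem (i j : Fin 4) (a : ZMod p → ZMod 2) : orbitSum e g i j a ∈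
      Submodule.span (ZMod 2) {y | ∃ i j t, g i j ∘ blockShift e t = y} :=
    Submodule.sum_smul_mem _ _ fun t _ => Submodule.subset_span ⟨i, j, -t, rfl⟩
  rw [h.eq_orbitSum_add_orbitSum_add_inflate hx zero_ne_one, hx₀]
  exact add_mem (add_mem (orbitSum_mem _ _ _) (orbitSum_mem _ _ _)) (zero_mem _)

theorem dotProduct_eq_zero {x y : Fin n → ZMod 2} (hx : x ∈ orbitDual e g)
    (hy : y ∈ orbitDual e g) (hy₀ : blockParity e y = 0) : x ⬝ᵥ y = 0 := by
  refine dotProduct_eq_zero_of_mem_span (S := {x}) ?_ (Submodule.mem_span_singleton_self x)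
    (h.mem_span_of_blockParity_eq_zero hy hy₀)
  rintro _ rfl _ ⟨i, j, t, rfl⟩
  exact hx i j t

theorem four_dvd_wt_of_blockParity_eq_zero {x : Fin n → ZMod 2} (hx : x ∈ orbitDual e g)
    (hx₀ : blockParity e x = 0) : 4 ∣ wt x := by
  refine four_dvd_wt_of_mem_span ?_ ?_ (h.mem_span_of_blockParity_eq_zero hx hx₀)
  · rintro _ ⟨i, j, t, rfl⟩
    rw [wt_comp]
    exact h.four_dvd_wt i j
  · rintro _ ⟨i, j, t, rfl⟩ _ ⟨k, l, s, rfl⟩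
    rw [dotProduct_comp_blockShift]
    exact h.orthogonal i j k l _

theorem add_inflate_mem_orbitDual {x : Fin n → ZMod 2} (hx : x ∈ orbitDual e g) :
    x + inflate e (blockParity e x) ∈ orbitDual e g :=
  add_mem hx (h.inflate_mem_orbitDual _)

theorem blockParity_add_inflate (x : Fin n → ZMod 2) :
    blockParity e (x + inflate e (blockParity e x)) = 0 := by
  rw [map_add, blockParity_inflate e h.odd, CharTwo.add_self_eq_zero]

theorem dotProduct_eq_dotProduct_blockParity {x y : Fin n → ZMod 2} (hx : x ∈ orbitDual e g)
    (hy : y ∈ orbitDual e g) : x ⬝ᵥ y = blockParity e x ⬝ᵥ blockParity e y := by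
  have dot_eq_zero := h.dotProduct_eq_zero hx (h.add_inflate_mem_orbitDual hy)
    (h.blockParity_add_inflate y)
  rwa [dotProduct_add, dotProduct_inflate, CharTwo.add_eq_zero] at dot_eq_zero

theorem wt_modEq {x : Fin n → ZMod 2} (hx : x ∈ orbitDual e g) :
    wt x ≡ p * wt (blockParity e x) [MOD 4] := by
  set c := blockParity e x
  have four_dvd : 4 ∣ wt (x + inflate e c) := h.four_dvd_wt_of_blockParity_eq_zero
    (h.add_inflate_mem_orbitDual hx) (h.blockParity_add_inflate x)
  have wt_add : wt (x + inflate e c) + 2 * wt (x * inflate e c) = wt x + p * wt c :=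
    wt_inflate e c ▸ wt_add_add_two_mul_wt_mul x (inflate e c)
  have wt_mul : (wt (x * inflate e c) : ZMod 2) = (wt c : ZMod 2) := by
    have mul_self (a : ZMod 2) : a * a = a := by revert a; decide
    rw [natCast_wt, natCast_wt, ← sum_congr rfl fun b _ => mul_self (c b)]
    exact dotProduct_inflate e x c
  rw [ZMod.natCast_eq_natCast_iff] at wt_mul
  obtain ⟨k, hk⟩ := h.odd
  rw [show p * wt c = 2 * (k * wt c) + wt c by rw [hk]; ring] at wt_add ⊢
  simp only [Nat.ModEq] at wt_mul ⊢
  omega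

end IsBlockSystem

end BlockSystem

section BlockCode

variable {n p : ℕ} [NeZero p] {e : Fin 4 × ZMod p ≃ Fin n} {g : Fin 4 → Fin 4 → Fin n → ZMod 2}
  {P Q : Submodule (ZMod 2) (Fin 4 → ZMod 2)}

/-- The words of `orbitDual e g` whose block parities form a word of `P`. -/
def blockLift (e : Fin 4 × ZMod p ≃ Fin n) (g : Fin 4 → Fin 4 → Fin n → ZMod 2)
    (P : Set (Fin 4 → ZMod 2)) : Set (Fin n → ZMod 2) :=
  {x | x ∈ orbitDual e g ∧ blockParity e x ∈ P}

/-- The linear code of the words of `orbitDual e g` whose block parities form a codeword of `P`. -/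
def blockCode (e : Fin 4 × ZMod p ≃ Fin n) (g : Fin 4 → Fin 4 → Fin n → ZMod 2)
    (P : Submodule (ZMod 2) (Fin 4 → ZMod 2)) : Submodule (ZMod 2) (Fin n → ZMod 2) :=
  orbitDual e g ⊓ P.comap (blockParity e)

theorem coe_blockCode : (blockCode e g P : Set (Fin n → ZMod 2)) = blockLift e g P := rfl

theorem mem_blockCode {x : Fin n → ZMod 2} :
    x ∈ blockCode e g P ↔ x ∈ orbitDual e g ∧ blockParity e x ∈ P := Iff.rfl

theorem blockShift_mem_codeAut_blockCode (s : ZMod p) :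
    blockShift e s ∈ codeAut (blockCode e g P) := fun x => by
  rw [mem_blockCode, mem_blockCode, comp_blockShift_mem_orbitDual_iff, blockParity_comp_blockShift]

namespace IsBlockSystem

variable (h : IsBlockSystem e g)
include h

theorem inflate_mem_blockCode {c : Fin 4 → ZMod 2} : inflate e c ∈ blockCode e g P ↔ c ∈ P := by
  rw [mem_blockCode, blockParity_inflate e h.odd]
  exact and_iff_right (h.inflate_mem_orbitDual c)

theorem comp_blockShift_mem_blockLift {P : Set (Fin 4 → ZMod 2)} (hP : 0 ∈ P) (i j : Fin 4)
    (t : ZMod p) : g i j ∘ blockShift e t ∈ blockLift e g P := by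
  refine ⟨(comp_blockShift_mem_orbitDual_iff t).2 (h.mem_orbitDual i j), ?_⟩
  rwa [blockParity_comp_blockShift, h.blockParity_eq_zero]

theorem dualSet_blockLift {P : Set (Fin 4 → ZMod 2)} (hP : 0 ∈ P) :
    dualSet (blockLift e g P) = blockLift e g (dualSet P) := by
  ext x
  refine ⟨fun hx => ⟨fun i j t => hx _ (h.comp_blockShift_mem_blockLift hP i j t), fun c hc => ?_⟩,
    fun hx y hy => ?_⟩
  · refine (dotProduct_inflate e x c).symm.trans (hx _ ⟨h.inflate_mem_orbitDual c, ?_⟩)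
    rwa [blockParity_inflate e h.odd]
  · exact (h.dotProduct_eq_dotProduct_blockParity hx.1 hy.1).trans (hx.2 _ hy.2)

theorem isSelfDual_blockCode (hP : IsSelfDual P) : IsSelfDual (blockCode e g P) := by
  rw [IsSelfDual, coe_blockCode, h.dualSet_blockLift P.zero_mem, ← hP]

theorem evenSub_blockCode : evenSub (blockCode e g P) = blockLift e g (evenSub P) := by
  ext x
  refine and_assoc.trans (and_congr_right fun hx => and_congr_right fun _ => ?_)
  rw [(h.wt_modEq hx).dvd_iff dvd_rfl, Nat.Coprime.dvd_mul_left]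
  exact Nat.Coprime.pow_left 2 h.odd.coprime_two_left

theorem shadow_blockCode : shadow (blockCode e g P) = blockLift e g (shadow P) := by
  have zero_mem : (0 : Fin 4 → ZMod 2) ∈ evenSub P := ⟨P.zero_mem, by simp [wt]⟩
  simp only [_root_.shadow, h.evenSub_blockCode, h.dualSet_blockLift zero_mem, coe_blockCode]
  exact Set.ext fun x => ⟨fun ⟨⟨hK, hS⟩, hC⟩ => ⟨hK, hS, fun hP => hC ⟨hK, hP⟩⟩,
    fun ⟨hK, hS, hP⟩ => ⟨⟨hK, hS⟩, fun hC => hP hC.2⟩⟩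

theorem isSinglyEvenSelfDual_blockCode (hP : IsSinglyEvenSelfDual P) :
    IsSinglyEvenSelfDual (blockCode e g P) := by
  obtain ⟨selfDual, c, hc, hwt⟩ := hP
  refine ⟨h.isSelfDual_blockCode selfDual, inflate e c, h.inflate_mem_blockCode.2 hc, ?_⟩
  rwa [wt_inflate, Nat.Coprime.dvd_mul_left (Nat.Coprime.pow_left 2 h.odd.coprime_two_left)]

end IsBlockSystem

end BlockCode

section Rigidity

variable {n p : ℕ} [Fact p.Prime] {e : Fin 4 × ZMod p ≃ Fin n}
  {g : Fin 4 → Fin 4 → Fin n → ZMod 2} {P Q : Submodule (ZMod 2) (Fin 4 → ZMod 2)}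

namespace IsBlockSystem

variable (h : IsBlockSystem e g)
include h

theorem apply_conj_eq_comp_blockShift {v : Equiv.Perm (Fin n)} {π : Equiv.Perm (Fin 4)} {m : ZMod p}
    {s : Fin 4 → ZMod p} (hm : m ≠ 0) (hv : ∀ b t, v (e (b, t)) = e (π b, m * t + s b))
    (hgv : ∀ i j, g i j ∘ v ∈ orbitDual e g) {i j : Fin 4} (hij : i ≠ j) :
    g (π i) (π j) ∘ v = g i j ∘ blockShift e (s i / m) := by
  have shift_mem := (comp_blockShift_mem_orbitDual_iff (s i / m)).2 (h.mem_orbitDual i j)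
  rw [← sub_eq_zero]
  refine h.eq_zero_of_apply_eq_zero (sub_mem (hgv _ _) shift_mem) ?_ hij (fun t => ?_) fun t => ?_
  · rw [map_sub, blockParity_comp_blockShift, h.blockParity_eq_zero, sub_zero]
    funext b
    simp only [blockParity_apply, Function.comp_apply, hv]
    refine (((Equiv.mulLeft₀ m hm).trans (Equiv.addRight (s b))).sum_comp
      fun t => g (π i) (π j) (e (π b, t))).trans ?_
    exact congrFun (h.blockParity_eq_zero (π i) (π j)) (π b)
  · have : t + s i / m = 0 ↔ m * t + s i = 0 := by
      rw [← mul_right_inj' hm, mul_add, mul_div_cancel₀ _ hm, mul_zero]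
    simp [hv, h.apply_fst _ _ hij, h.apply_fst _ _ (π.injective.ne hij), this]
  · simp [hv, h.apply_snd]

theorem shift_eq_of_comp_eq {s : Fin 4 → ZMod p} {v : Equiv.Perm (Fin n)}
    (hv : ∀ b t, v (e (b, t)) = e (b, t + s b))
    (hgv : ∀ i j, i ≠ j → g i j ∘ v = g i j ∘ blockShift e (s i)) (i k : Fin 4) : s k = s i := by
  by_contra hs
  obtain ⟨j, hij, hkj⟩ : ∃ j, i ≠ j ∧ k ≠ j := by
    clear hs
    revert i k
    decide
  have periodic : Function.Periodic (fun t => g i j (e (k, t))) (s k - s i) := fun t => by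
    have := congrFun (hgv i j hij) (e (k, t - s i))
    simpa [hv, sub_add_eq_add_sub, add_sub_assoc] using this
  have const (t : ZMod p) : g i j (e (k, t)) = g i j (e (k, 0)) := by
    have := periodic.nat_mul_eq (t / (s k - s i)).val
    rwa [ZMod.natCast_zmod_val, div_mul_cancel₀ _ (sub_ne_zero.2 hs)] at this
  have eq_zero : g i j (e (k, 0)) = 0 := by
    have parity_eq : ∑ t, g i j (e (k, t)) = 0 := congrFun (h.blockParity_eq_zero i j) k
    simpa [const, ZMod.natCast_eq_one_iff_odd.2 h.odd] using parity_eq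
  have g_eq_zero := h.eq_zero_of_apply_eq_zero (h.mem_orbitDual i j) (h.blockParity_eq_zero i j) hkj
    (fun t => (const t).trans eq_zero) (h.apply_snd i j)
  have := h.apply_fst i j hij 1
  simp [g_eq_zero] at this

end IsBlockSystem

theorem exists_pow_apply_eq {v : Equiv.Perm (Fin n)} {m : ZMod p}
    {s : Fin 4 → ZMod p} (hv : ∀ b t, v (e (b, t)) = e (b, m * t + s b)) (k : ℕ) (b : Fin 4) :
    ∃ s', ∀ t, (v ^ k) (e (b, t)) = e (b, m ^ k * t + s') := by
  induction k with
  | zero => exact ⟨0, by simp⟩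
  | succ k ih =>
    obtain ⟨s', hs'⟩ := ih
    exact ⟨m * s' + s b, fun t => by
      rw [pow_succ', Equiv.Perm.mul_apply, hs', hv, pow_succ', mul_add, mul_assoc, add_assoc]⟩

theorem eq_one_of_orderOf_eq_prime_pow {v : Equiv.Perm (Fin n)} {m : ZMod p} {s : Fin 4 → ZMod p}
    (hv : ∀ b t, v (e (b, t)) = e (b, m * t + s b)) {k : ℕ} (hk : orderOf v = p ^ k) : m = 1 := by
  obtain ⟨s', hs'⟩ := exists_pow_apply_eq hv (p ^ k) 0
  simp only [← hk, pow_orderOf_eq_one, Equiv.Perm.one_apply, e.apply_eq_iff_eq] at hs'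
  simp only [hk, ZMod.pow_card_pow, Prod.mk.injEq, true_and] at hs'
  have s'_eq_zero : s' = 0 := by simpa using (hs' 0).symm
  simpa [s'_eq_zero] using (hs' 1).symm

namespace IsBlockSystem

variable (h : IsBlockSystem e g)
  (rigid : ∀ π : Equiv.Perm (Fin 4), (∀ i j, i ≠ j → wt (g (π i) (π j)) = wt (g i j)) → π = 1)
include h rigid

theorem eq_one_of_comp_mem_orbitDual
    {v : Equiv.Perm (Fin n)} {π : Equiv.Perm (Fin 4)} {m : ZMod p}
    {s : Fin 4 → ZMod p} (hm : m ≠ 0) (hv : ∀ b t, v (e (b, t)) = e (π b, m * t + s b))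
    (hgv : ∀ i j, g i j ∘ v ∈ orbitDual e g) : π = 1 := by
  refine rigid π fun i j hij => ?_
  rw [← wt_comp _ v, h.apply_conj_eq_comp_blockShift hm hv hgv hij, wt_comp]

theorem mem_zpowers_of_orderOf_eq_prime_pow {v : Equiv.Perm (Fin n)}
    (hgv : ∀ i j, g i j ∘ v ∈ orbitDual e g)
    (hconj : v * blockShift e 1 * v⁻¹ ∈ Subgroup.zpowers (blockShift e 1))
    (hord : ∃ k, orderOf v = p ^ k) : v ∈ Subgroup.zpowers (blockShift e 1) := by
  obtain ⟨π, m, s, hm, hv⟩ := exists_affine_of_conj_blockShift_mem e hconj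
  obtain rfl := h.eq_one_of_comp_mem_orbitDual rigid hm hv hgv
  obtain ⟨k, hk⟩ := hord
  obtain rfl := eq_one_of_orderOf_eq_prime_pow hv hk
  have comp_eq (i j : Fin 4) (hij : i ≠ j) : g i j ∘ v = g i j ∘ blockShift e (s i) := by
    simpa using h.apply_conj_eq_comp_blockShift hm hv hgv hij
  simp only [Equiv.Perm.one_apply, one_mul] at hv
  refine (mem_zpowers_blockShift e).2 ⟨s 0, perm_ext_block e fun b t => ?_⟩
  rw [blockShift_apply, hv, h.shift_eq_of_comp_eq hv comp_eq 0 b]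

theorem eq_of_codeEquiv (hPQ : CodeEquiv (blockCode e g P) (blockCode e g Q)) : P = Q := by
  have comp_mem {R : Submodule (ZMod 2) (Fin 4 → ZMod 2)} {v : Equiv.Perm (Fin n)}
      (hv : ∀ x, x ∈ blockCode e g Q → x ∘ v ∈ blockCode e g R) (i j) : g i j ∘ v ∈ orbitDual e g :=
    (hv _ ⟨h.mem_orbitDual i j, by simp [h.blockParity_eq_zero]⟩).1
  obtain ⟨v, hconj, hv⟩ := hPQ.exists_conj_mem_zpowers (orderOf_blockShift_one e)
    (blockShift_mem_codeAut_blockCode 1) (blockShift_mem_codeAut_blockCode 1) fun w hw =>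
      h.mem_zpowers_of_orderOf_eq_prime_pow rigid (comp_mem fun x => (hw x).2)
  obtain ⟨π, m, s, hm, hπ⟩ := exists_affine_of_conj_blockShift_mem e hconj
  obtain rfl := h.eq_one_of_comp_mem_orbitDual rigid hm hπ (comp_mem fun x => (hv x).2)
  ext c
  have inflate_comp : inflate e c ∘ v = inflate e c := funext_block e fun b t => by simp [hπ]
  rw [← h.inflate_mem_blockCode, ← h.inflate_mem_blockCode, ← hv, inflate_comp]

end IsBlockSystem

end Rigidity

section Packing

variable {n : ℕ}

/-- The coordinates of a word as the digits of a number in base 128, so that words are added by the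
bitwise exclusive or, and weights less than 127 are remainders modulo 127. -/
@[irreducible]
def packed (x : Fin n → ZMod 2) : ℕ := Fin.foldr n (fun i a => 128 * a + (x i).val) 0

theorem packed_succ (x : Fin (n + 1) → ZMod 2) :
    packed x = 2 ^ 7 * packed (Fin.tail x) + (x 0).val := by
  rw [packed, packed, Fin.foldr_succ]
  rfl

theorem packed_add (x y : Fin n → ZMod 2) : packed (x + y) = packed x ^^^ packed y := by
  induction n with
  | zero => simp [packed]
  | succ n ih =>
    have val_lt (a : ZMod 2) : a.val < 2 ^ 7 := (ZMod.val_lt a).trans (by norm_num)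
    have val_add (a b : ZMod 2) : (a + b).val = a.val ^^^ b.val := by revert a b; decide
    have tail_add : Fin.tail (x + y) = Fin.tail x + Fin.tail y := rfl
    rw [packed_succ, packed_succ, packed_succ, tail_add, ih, Pi.add_apply, val_add]
    refine Nat.eq_of_testBit_eq fun k => ?_
    rw [Nat.testBit_xor, Nat.testBit_two_pow_mul_add _ (val_add (x 0) (y 0) ▸ val_lt _),
      Nat.testBit_two_pow_mul_add _ (val_lt _), Nat.testBit_two_pow_mul_add _ (val_lt _)]
    split_ifs <;> exact Nat.testBit_xor ..

theorem packed_modEq_wt (x : Fin n → ZMod 2) : packed x ≡ wt x [MOD 127] := by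
  rw [wt_eq_sum_val]
  induction n with
  | zero => simp [packed, Nat.ModEq.refl]
  | succ n ih =>
    rw [packed_succ, Fin.sum_univ_succ, add_comm (x 0).val]
    refine Nat.ModEq.add_right _ ?_
    exact (Nat.ModEq.mul_right _ (by decide : 2 ^ 7 ≡ 1 [MOD 127])).trans
      ((one_mul (packed (Fin.tail x))).symm ▸ ih _)

theorem packed_mod (x : Fin n → ZMod 2) (hn : n < 127) : packed x % 127 = wt x := by
  have wt_le : wt x ≤ n := hammingNorm_le_card_fintype.trans_eq (Fintype.card_fin n)
  exact Eq.trans (packed_modEq_wt x) (Nat.mod_eq_of_lt (wt_le.trans_lt hn))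

/-- Whether `P` holds for the exclusive or of `a` with any `k` entries of a list. -/
def forallXor (P : ℕ → Bool) : ℕ → List ℕ → ℕ → Bool
  | 0, _, a => P a
  | _ + 1, [], _ => true
  | k + 1, c :: cs, a => forallXor P k cs (Nat.xor a c) && forallXor P (k + 1) cs a

theorem forallXor.foldl_map_filter {α : Type*} {P : ℕ → Bool} {L : List α} {p : α → Bool}
    {f : α → ℕ} {k a : ℕ} (hk : (L.filter p).length = k) (hP : forallXor P k (L.map f) a) :
    P (((L.filter p).map f).foldl Nat.xor a) := by
  induction L generalizing k a with
  | nil =>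
    subst hk
    exact hP
  | cons c L ih =>
    by_cases hc : p c
    · rw [List.filter_cons_of_pos hc] at hk ⊢
      subst hk
      exact ih rfl (Bool.and_eq_true_iff.1 hP).1
    · rw [List.filter_cons_of_neg hc] at hk ⊢
      refine ih hk ?_
      cases k with
      | zero => cases L <;> exact hP
      | succ k => exact (Bool.and_eq_true_iff.1 hP).2

theorem packed_add_sum_smul {α : Type*} (L : List α) (a : α → ZMod 2) (w : α → Fin n → ZMod 2)
    (x : Fin n → ZMod 2) :
    packed (x + (L.map fun t => a t • w t).sum) =
      ((L.filter (a · = 1)).map fun t => packed (w t)).foldl Nat.xor (packed x) := by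
  induction L generalizing x with
  | nil => simp
  | cons t L ih =>
    obtain ha | ha : a t = 0 ∨ a t = 1 := by generalize a t = b; revert b; decide
    · simpa [ha] using ih x
    · simpa [ha, ← add_assoc, packed_add x (w t)] using ih (x + w t)

theorem length_filter_eq_one {α : Type*} (L : List α) (a : α → ZMod 2) :
    (L.filter (a · = 1)).length = (L.map fun t => (a t).val).sum := by
  induction L with
  | nil => rfl
  | cons t L ih =>
    obtain ha | ha : a t = 0 ∨ a t = 1 := by generalize a t = b; revert b; decide
    · simpa [ha] using ih
    · simp [ha, ih, add_comm, ZMod.val_one]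

end Packing

section Generators

instance : Fact (Nat.Prime 19) := ⟨by norm_num⟩

/-- The arrangement of the 76 coordinates into four consecutive blocks of length 19. -/
def cell : Fin 4 × ZMod 19 ≃ Fin 76 := finProdFinEquiv

/-- The word whose coordinates are the binary digits of `N`, starting with the lowest. -/
def ofBits (N : ℕ) (c : Fin 76) : ZMod 2 := if N.testBit c then 1 else 0

/-- The generators `gen i j`, one row for each `i`, as numbers read by `ofBits`. -/
def genBits : Fin 4 → Fin 4 → ℕ :=
  ![![0, 0xac0e3ab06c00007fffe, 0xdbe2000011ebdffffe, 0x1a48d0b54dffffe],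
    ![0xc9c5a7a77bffff00000, 0, 0xab0c400003ffff59569, 0x3abe3ffff5ebc5],
    ![0xe1817ffff8fab800000, 0xeba83ffff800002c496, 0, 0x1ffffbdcbc58357],
    ![0xffffc0aebe30d500000, 0xffffd40c3c00000fb61, 0xffffc00001a3938e06b, 0]]

/-- The block system behind the three codes. -/
def gen (i j : Fin 4) : Fin 76 → ZMod 2 := ofBits (genBits i j)

/-- All residues modulo 19, in increasing order. -/
def residues : List (ZMod 19) := List.finRange 19

theorem residues_eq_cons : residues = 0 :: residues.tail := rfl

/-- The rotation of `gen i j` by `-t`, in packed form. -/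
def packedRotation (i j : Fin 4) (t : ZMod 19) : ℕ := packed (gen i j ∘ blockShift cell (-t))

theorem packed_mod_eq_wt (x : Fin 76 → ZMod 2) : packed x % 127 = wt x :=
  packed_mod x (by norm_num)

set_option maxRecDepth 10000

theorem wt_gen (i j : Fin 4) : wt (gen i j) =
    ![![0, 36, 40, 36], ![40, 0, 36, 40], ![36, 36, 0, 40], ![36, 36, 36, 0]] i j := by
  rw [← packed_mod_eq_wt]
  revert i j
  decide +kernel

theorem four_dvd_wt_gen (i j : Fin 4) : 4 ∣ wt (gen i j) := by
  rw [wt_gen]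
  revert i j
  decide

theorem dotProduct_gen_comp_blockShift {x : Fin 76 → ZMod 2} {i j : Fin 4}
    (hx : ∀ t ∈ residues, Nat.xor (packed x) (packedRotation i j t) % 127 % 4 = packed x % 127 % 4)
    (t : ZMod 19) : x ⬝ᵥ (gen i j ∘ blockShift cell t) = 0 := by
  have wt_add : wt (x + gen i j ∘ blockShift cell t) ≡ wt x [MOD 4] := by
    rw [← packed_mod_eq_wt, ← packed_mod_eq_wt x, packed_add]
    simpa only [packedRotation, neg_neg] using! hx (-t) (List.mem_finRange _)
  refine (dotProduct_eq_zero_iff_modEq _ _).2 (wt_add.trans ?_)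
  rw [wt_comp]
  exact ((Nat.modEq_zero_iff_dvd.2 (four_dvd_wt_gen i j)).add_left (wt x)).symm

theorem isBlockSystem_gen : IsBlockSystem cell gen where
  apply_fst := by decide +kernel
  apply_snd := by decide +kernel
  blockParity_eq_zero i j := by
    funext b
    revert i j b
    decide +kernel
  orthogonal i j k l := by
    refine dotProduct_gen_comp_blockShift ?_
    revert i j k l
    decide +kernel
  four_dvd_wt := four_dvd_wt_gen

theorem eq_one_of_wt_gen (π : Equiv.Perm (Fin 4))
    (hπ : ∀ i j, i ≠ j → wt (gen (π i) (π j)) = wt (gen i j)) : π = 1 := by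
  simp only [wt_gen] at hπ
  revert π
  decide

end Generators

section MinimumWeight

theorem orbitSum_gen_eq_sum (i j : Fin 4) (a : ZMod 19 → ZMod 2) : orbitSum cell gen i j a =
    (residues.map fun t => a t • (gen i j ∘ blockShift cell (-t))).sum :=
  Fin.sum_univ_def _

theorem blockWt_eq_length (x : Fin 76 → ZMod 2) (i : Fin 4) :
    blockWt cell x i = (residues.filter fun t => x (cell (i, t)) = 1).length :=
  (Fin.sum_univ_def _).trans (length_filter_eq_one _ fun t => x (cell (i, t))).symm

/-- Whether the word packed as `v` has weight at least 14. -/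
def isHeavy (v : ℕ) : Bool := Nat.ble 14 (Nat.mod v 127)

theorem le_wt_of_isHeavy {x : Fin 76 → ZMod 2} (hx : isHeavy (packed x) = true) : 14 ≤ wt x :=
  packed_mod_eq_wt x ▸ Nat.le_of_ble_eq_true hx

/-- Whether all words of weight `a + 1` on block `i`, including its first coordinate, of weight `b`
on block `j`, and with block parities `q`, have weight at least 14. -/
def search (i j : Fin 4) (q : Fin 4 → ZMod 2) (a b : ℕ) : Bool :=
  forallXor
    (fun u => forallXor isHeavy b (residues.map (packedRotation j i)) u) a
    (residues.tail.map (packedRotation i j))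
    (Nat.xor (packed (inflate cell q)) (packedRotation i j 0))

theorem le_wt_of_search_of_apply_zero {x : Fin 76 → ZMod 2} (hx : x ∈ orbitDual cell gen)
    {i j : Fin 4} (hij : i ≠ j) (hx₀ : x (cell (i, 0)) = 1) {a b : ℕ}
    (ha : blockWt cell x i = a + 1) (hb : blockWt cell x j = b)
    (hs : search i j (blockParity cell x) a b = true) : 14 ≤ wt x := by
  have x_eq := isBlockSystem_gen.eq_orbitSum_add_orbitSum_add_inflate hx hij
  rw [add_comm, ← add_assoc, orbitSum_gen_eq_sum, orbitSum_gen_eq_sum] at x_eq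
  have support_eq : residues.filter (fun t => x (cell (i, t)) = 1) =
      0 :: residues.tail.filter fun t => x (cell (i, t)) = 1 :=
    (congrArg (List.filter _) residues_eq_cons).trans (List.filter_cons_of_pos (decide_eq_true hx₀))
  rw [blockWt_eq_length, support_eq, List.length_cons, add_left_inj] at ha
  rw [blockWt_eq_length] at hb
  rw [search] at hs
  have leaf := forallXor.foldl_map_filter hb (forallXor.foldl_map_filter ha hs)
  have packed_eq := congrArg packed x_eq
  rw [packed_add_sum_smul, packed_add_sum_smul, support_eq] at packed_eq
  exact le_wt_of_isHeavy (packed_eq ▸ leaf)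

theorem le_wt_of_search {x : Fin 76 → ZMod 2} (hx : x ∈ orbitDual cell gen) {i j : Fin 4}
    (hij : i ≠ j) {a b : ℕ} (ha : blockWt cell x i = a + 1) (hb : blockWt cell x j = b)
    (hs : search i j (blockParity cell x) a b = true) : 14 ≤ wt x := by
  have ha₀ : blockWt cell x i ≠ 0 := ha ▸ a.succ_ne_zero
  obtain ⟨t, ht⟩ := exists_apply_eq_one_of_blockWt_ne_zero cell ha₀
  rw [← blockWt_comp_blockShift cell x t] at ha hb
  rw [← blockParity_comp_blockShift cell x t] at hs
  rw [← comp_blockShift_mem_orbitDual_iff t] at hx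
  rw [← wt_comp x (blockShift cell t)]
  have hx₀ : (x ∘ blockShift cell t) (cell (i, 0)) = 1 := by
    rwa [Function.comp_apply, blockShift_apply, zero_add]
  exact le_wt_of_search_of_apply_zero hx hij hx₀ ha hb hs

set_option maxRecDepth 10000

/-- The pairs `(a, b)` for which `search` is run. By `exists_smallWeights`, a word of weight at most
13 has weights `a + 1` and `b` on two of its blocks, unless it vanishes on two blocks or has weight
3 on every block. -/
def smallWeights : List (ℕ × ℕ) :=
  [(0, 0), (1, 0), (2, 0), (3, 0), (0, 1), (0, 2), (0, 3), (1, 2)]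

theorem search_of_mem_smallWeights : ∀ i j : Fin 4, i ≠ j → ∀ ab ∈ smallWeights,
    ∀ q : Fin 4 → ZMod 2, ∑ b, q b = 0 → q i = (ab.1 + 1 : ℕ) → q j = (ab.2 : ℕ) →
      search i j q ab.1 ab.2 = true := by
  decide +kernel

theorem search_three_three : search 0 1 (fun _ => 1) 2 3 = true := by
  decide +kernel

theorem exists_smallWeights {w : Fin 4 → ℕ} (hw : ∑ b, w b ≤ 13) (even : 2 ∣ ∑ b, w b)
    (four_dvd : 4 ∣ ∑ b, w b + ∑ b, w b % 2) :
    (∃ i j, i ≠ j ∧ w i = 0 ∧ w j = 0) ∨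
      (∃ i j, i ≠ j ∧ ∃ ab ∈ smallWeights, w i = ab.1 + 1 ∧ w j = ab.2) ∨ ∀ b, w b = 3 := by
  obtain ⟨σ, mono⟩ : ∃ σ : Equiv.Perm (Fin 4), Monotone (w ∘ σ) := ⟨_, Tuple.monotone_sort w⟩
  have ne : σ 0 ≠ σ 1 := σ.injective.ne (by decide)
  have le₀₁ : w (σ 0) ≤ w (σ 1) := mono (by decide)
  have le₁₂ : w (σ 1) ≤ w (σ 2) := mono (by decide)
  have le₂₃ : w (σ 2) ≤ w (σ 3) := mono (by decide)
  rw [← Equiv.sum_comp σ w, Fin.sum_univ_four] at hw even four_dvd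
  rw [← Equiv.sum_comp σ fun b => w b % 2, Fin.sum_univ_four] at four_dvd
  obtain h₀ | h₀ | h₀ | h₀ : w (σ 0) = 0 ∨ w (σ 0) = 1 ∨ w (σ 0) = 2 ∨ w (σ 0) = 3 := by omega
  · by_cases h₁ : w (σ 1) = 0
    · exact .inl ⟨_, _, ne, h₀, h₁⟩
    have mem : ∀ k ∈ Icc 1 4, (k - 1, 0) ∈ smallWeights := by decide
    have mem_Icc : w (σ 1) ∈ Icc 1 4 := mem_Icc.2 (by omega)
    have sub_add : w (σ 1) = w (σ 1) - 1 + 1 := by omega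
    exact .inr (.inl ⟨_, _, ne.symm, _, mem _ mem_Icc, sub_add, h₀⟩)
  · have mem : ∀ k ∈ Icc 1 3, (0, k) ∈ smallWeights := by decide
    have mem_Icc : w (σ 1) ∈ Icc 1 3 := mem_Icc.2 (by omega)
    exact .inr (.inl ⟨_, _, ne, _, mem _ mem_Icc, h₀, rfl⟩)
  · have h₁ : w (σ 1) = 2 := by omega
    exact .inr (.inl ⟨_, _, ne, (1, 2), by decide, h₀, h₁⟩)
  · have h₁ : w (σ 1) = 3 ∧ w (σ 2) = 3 ∧ w (σ 3) = 3 := by omega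
    refine .inr (.inr (σ.surjective.forall.2 fun k => ?_))
    fin_cases k
    exacts [h₀, h₁.1, h₁.2.1, h₁.2.2]

theorem eq_zero_of_blockWt_eq_zero {x : Fin 76 → ZMod 2} (hx : x ∈ orbitDual cell gen)
    (hw : wt x ≤ 13) {i j : Fin 4} (hij : i ≠ j) (hi : blockWt cell x i = 0)
    (hj : blockWt cell x j = 0) : x = 0 := by
  have xi := apply_eq_zero_of_blockWt_eq_zero cell hi
  have xj := apply_eq_zero_of_blockWt_eq_zero cell hj
  have x_eq : x = inflate cell (blockParity cell x) := by
    refine funext_block cell fun k t => ?_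
    rw [inflate_apply]
    by_cases hki : k = i
    · simp [hki, xi, blockParity_apply]
    by_cases hkj : k = j
    · simp [hkj, xj, blockParity_apply]
    · exact isBlockSystem_gen.apply_eq_blockParity hx xi xj hij hki hkj t
  have wt_eq : wt x = 19 * wt (blockParity cell x) := by
    rw [← wt_inflate cell, ← x_eq]
  exact hammingNorm_eq_zero.1 (show wt x = 0 by omega)

theorem le_wt_of_mem_orbitDual {x : Fin 76 → ZMod 2} (hx : x ∈ orbitDual cell gen)
    (parity_sum : ∑ b, blockParity cell x b = 0) (hx₀ : x ≠ 0) : 14 ≤ wt x := by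
  by_contra! hlt
  have hw : wt x ≤ 13 := Nat.le_of_lt_succ hlt
  have even : 2 ∣ wt x := by
    rw [← ZMod.natCast_eq_zero_iff, ← sum_blockWt cell, Nat.cast_sum, ← parity_sum]
    exact sum_congr rfl fun b _ => natCast_blockWt cell x b
  have four_dvd : 4 ∣ wt x + wt (blockParity cell x) := by
    have := isBlockSystem_gen.wt_modEq hx
    rw [Nat.ModEq] at this
    omega
  rw [wt_blockParity] at four_dvd
  rw [← sum_blockWt cell x] at hw even four_dvd
  obtain ⟨i, j, hij, hi, hj⟩ | ⟨i, j, hij, ab, hab, hi, hj⟩ | eq_three :=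
    exists_smallWeights hw even four_dvd
  · exact hx₀ (eq_zero_of_blockWt_eq_zero hx (Nat.le_of_lt_succ hlt) hij hi hj)
  · refine hlt.not_ge (le_wt_of_search hx hij hi hj ?_)
    refine search_of_mem_smallWeights i j hij ab hab _ parity_sum ?_ ?_
    · rw [← natCast_blockWt, hi]
    · rw [← natCast_blockWt, hj]
  · refine hlt.not_ge (le_wt_of_search hx zero_ne_one (eq_three 0) (eq_three 1) ?_)
    have parity_eq : blockParity cell x = fun _ => 1 := by
      funext b
      rw [← natCast_blockWt, eq_three]
      rfl
    rw [parity_eq]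
    exact search_three_three

end MinimumWeight

section Construction

/-- The self-dual codes of length 4: the one indexed by `m` pairs the coordinate `0` with the
coordinate `m + 1`, and the two remaining coordinates with each other. -/
def pairCode (m : Fin 3) : Submodule (ZMod 2) (Fin 4 → ZMod 2) where
  carrier := {c | c 0 = c m.succ ∧ ∑ b, c b = 0}
  add_mem' hc hd := by
    simp only [Set.mem_ofPred_eq, Pi.add_apply, sum_add_distrib] at *
    simp [hc, hd]
  zero_mem' := by simp
  smul_mem' a c hc := by
    simp only [Set.mem_ofPred_eq, Pi.smul_apply, ← smul_sum] at *
    simp [hc]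

theorem mem_pairCode {m : Fin 3} {c : Fin 4 → ZMod 2} :
    c ∈ pairCode m ↔ c 0 = c m.succ ∧ ∑ b, c b = 0 := Iff.rfl

theorem isSinglyEvenSelfDual_pairCode (m : Fin 3) : IsSinglyEvenSelfDual (pairCode m) := by
  refine ⟨Set.ext ?_, Pi.single 0 1 + Pi.single m.succ 1, ?_, ?_⟩
  · simp only [dualSet, SetLike.mem_coe, mem_pairCode, Set.mem_ofPred_eq]
    revert m
    decide +kernel
  · rw [mem_pairCode]
    revert m
    decide
  · rw [wt]
    revert m
    decide

theorem mem_shadow_pairCode {m : Fin 3} {c : Fin 4 → ZMod 2} :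
    c ∈ shadow (pairCode m) ↔ c 0 ≠ c m.succ ∧ ∑ b, c b = 0 := by
  simp only [_root_.shadow, dualSet, evenSub, Set.mem_sdiff, SetLike.mem_coe, mem_pairCode,
    Set.mem_ofPred_eq, wt]
  revert m c
  decide +kernel

theorem pairCode_injective : Function.Injective pairCode := fun m l h => by
  have mem_iff := SetLike.ext_iff.1 h
  simp only [mem_pairCode] at mem_iff
  clear h
  revert m l
  decide

/-- Words of weight 14, found by computer: `lightWord m` lies in the code built from `pairCode m`,
and `lightWord (m + 1)` in its shadow. -/
def lightWord : Fin 3 → Fin 76 → ZMod 2 :=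
  ![ofBits 0x2284092d90005, ofBits 0x341700048c504, ofBits 0x3a4200c08d28]

set_option maxRecDepth 10000

theorem wt_lightWord (m : Fin 3) : wt (lightWord m) = 14 := by
  rw [← packed_mod_eq_wt]
  revert m
  decide +kernel

theorem lightWord_mem_orbitDual (m : Fin 3) : lightWord m ∈ orbitDual cell gen := fun i j => by
  refine dotProduct_gen_comp_blockShift ?_
  revert m i j
  decide +kernel

theorem blockParity_lightWord (m : Fin 3) : blockParity cell (lightWord m) =
    ![![1, 1, 0, 0], ![1, 0, 1, 0], ![0, 1, 1, 0]] m := by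
  revert m
  decide +kernel

theorem lightWord_ne_zero (m : Fin 3) : lightWord m ≠ 0 := fun h => by
  have := wt_lightWord m
  simp [h, wt] at this

theorem minWt_blockCode_pairCode (m : Fin 3) : minWt (blockCode cell gen (pairCode m)) = 14 := by
  refine minWtSet_eq (fun x hx => le_wt_of_mem_orbitDual hx.1 hx.2.2) (x := lightWord m)
    ⟨lightWord_mem_orbitDual m, ?_⟩ (lightWord_ne_zero m) (wt_lightWord m)
  change blockParity cell (lightWord m) ∈ pairCode m
  rw [blockParity_lightWord, mem_pairCode]
  revert m
  decide

theorem minWtSet_shadow_blockCode_pairCode (m : Fin 3) :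
    minWtSet (shadow (blockCode cell gen (pairCode m))) = 14 := by
  rw [isBlockSystem_gen.shadow_blockCode]
  refine minWtSet_eq (fun x hx => le_wt_of_mem_orbitDual hx.1 (mem_shadow_pairCode.1 hx.2).2)
    (x := lightWord (m + 1)) ⟨lightWord_mem_orbitDual _, ?_⟩ (lightWord_ne_zero _) (wt_lightWord _)
  rw [blockParity_lightWord, mem_shadow_pairCode]
  revert m
  decide

end Construction

/-- There exist at least 3 pairwise inequivalent s-extremal singly even self-dual
`[76, 38, 14]` codes (shadow minimum weight 14), each admitting an automorphism of
order 19, i.e. a coordinate permutation of order 19 mapping the code onto itself. -/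
theorem exists_3_sExtremal_76_aut19 :
    ∃ f : Fin 3 → Submodule (ZMod 2) (Fin 76 → ZMod 2),
      (∀ i, IsSinglyEvenSelfDual (f i) ∧
        Module.finrank (ZMod 2) (f i) = 38 ∧
        minWt (f i) = 14 ∧
        minWtSet (shadow (f i)) = 14 ∧
        ∃ σ : Equiv.Perm (Fin 76), orderOf σ = 19 ∧
          Submodule.map (LinearMap.funLeft (ZMod 2) (ZMod 2) σ) (f i) = f i) ∧
      ∀ i j, i ≠ j → ¬ CodeEquiv (f i) (f j) := by
  have singlyEven (m) : IsSinglyEvenSelfDual (blockCode cell gen (pairCode m)) :=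
    isBlockSystem_gen.isSinglyEvenSelfDual_blockCode (isSinglyEvenSelfDual_pairCode m)
  refine ⟨fun m => blockCode cell gen (pairCode m), fun m => ⟨singlyEven m, ?_,
    minWt_blockCode_pairCode m, minWtSet_shadow_blockCode_pairCode m, blockShift cell 1,
    orderOf_blockShift_one cell, map_funLeft_eq_iff.2 (blockShift_mem_codeAut_blockCode 1)⟩, ?_⟩
  · exact Nat.eq_of_mul_eq_mul_left two_pos (singlyEven m).1.two_mul_finrank
  · intro i j hij equiv
    exact hij (pairCode_injective (isBlockSystem_gen.eq_of_codeEquiv eq_one_of_wt_gen equiv))
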